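/- For integers k ≥ 1 and n ≥ 0, the sum over partitions λ of length at most k of (∏_{i=1}^{k-1} (-q;q)_{λ_i - λ_{i+1}}) z^{|λ|} q^{Σ_i λ_i^2} [n choose λ]_{q^2} equals Σ_{r=0}^n (-1)^r z^{kr} q^{(k+1)r^2} [n choose r]_{q^2} ((-z;q)_{2n+1} / (z^2 q^{2r}; q^2)_{n+1}) (1 - z q^{2r}). -/

import Mathlib

/-- Finite q-Pochhammer symbol `(x;q)_n = ∏_{k=0}^{n-1} (1 - x q^k)`. -/
noncomputable def qPoch (x q : ℂ) (n : ℕ) : ℂ := ∏ k ∈ Finset.range n, (1 - x * q ^ k)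

/-- Infinite q-Pochhammer symbol `(x;q)_∞ = ∏_{k≥0} (1 - x q^k)`. -/
noncomputable def qPochInf (x q : ℂ) : ℂ := ∏' k : ℕ, (1 - x * q ^ k)

/-- Gaussian binomial coefficient `[n choose k]_q`, via the q-Pascal recurrence. -/
def gb (q : ℂ) : ℕ → ℕ → ℂ
  | _, 0 => 1
  | 0, _ + 1 => 0
  | n + 1, k + 1 => gb q n k + q ^ (k + 1) * gb q n (k + 1)

/-- Partitions with at most `k` (positive) parts: antitone sequences of naturals vanishing
from index `k` on; `l 0` is the largest part `λ_1`, and `l (k-1)` is `λ_k`. -/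
def PartK (k : ℕ) : Type := {l : ℕ → ℕ // Antitone l ∧ ∀ i, k ≤ i → l i = 0}

/-- `|λ| = Σ_i λ_i`. -/
def wtK (k : ℕ) (l : PartK k) : ℕ := ∑ i ∈ Finset.range k, l.1 i

/-- `n_2(λ) = Σ_i λ_i^2`. -/
def n2K (k : ℕ) (l : PartK k) : ℕ := ∑ i ∈ Finset.range k, (l.1 i) ^ 2

/-- `n(λ) = Σ_i binom(λ_i, 2)`. -/
def nK (k : ℕ) (l : PartK k) : ℕ := ∑ i ∈ Finset.range k, Nat.choose (l.1 i) 2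

/-- `(x;q)_λ = ∏_{i=1}^{k} (x;q)_{λ_i - λ_{i+1}}` (with `λ_{k+1} = 0`). -/
noncomputable def pochK (x q : ℂ) (k : ℕ) (l : PartK k) : ℂ :=
  ∏ i ∈ Finset.range k, qPoch x q (l.1 i - l.1 (i + 1))

/-!
A Bailey pair `(α, β)` relative to `z` satisfies
`β_n = ∑_{r ≤ n} α_r / ((q;q)_{n-r} (zq;q)_{n+r})`. Bailey's lemma (`ρ₁ → ∞`, with `d = z q / ρ₂`
free) turns one pair into another, and is applied here with three values of `d`:

* `d = -q`, applied to the unit pair, gives a seed pair with `β_n = 1 / (q²;q²)_n`;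
* `d = 0`, iterated `k - 1` times on the seed pair, multiplies `α_r` by `z^r q^{r²}` each time. On
  the `β` side one such step sums over the largest remaining part of `λ`, since
  `(-q;q)_m / (q²;q²)_m = 1 / (q;q)_m`;
* `d = -z q^{n+1}` gives the last step: `(zq/d;q)_m = (-q^{-n};q)_m` turns `1 / (q;q)_{n-m}` into
  a multiple of `1 / (q²;q²)_{n-m}`, the factor in `[n choose λ]_{q²}`.
-/

open Finset

section QPochhammer

variable (x q : ℂ) {m n : ℕ}

lemma qPoch_zero : qPoch x q 0 = 1 :=
  prod_range_zero _

lemma qPoch_succ (n : ℕ) : qPoch x q (n + 1) = qPoch x q n * (1 - x * q ^ n) :=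
  prod_range_succ _ n

lemma qPoch_add (m n : ℕ) : qPoch x q (m + n) = qPoch x q m * qPoch (x * q ^ m) q n := by
  simp only [qPoch, prod_range_add, pow_add, mul_assoc]

lemma qPoch_succ' (n : ℕ) : qPoch x q (n + 1) = (1 - x) * qPoch (x * q) q n := by
  rw [add_comm, qPoch_add, qPoch_succ, qPoch_zero, pow_zero, mul_one, one_mul, pow_one]

lemma qPoch_zero_left (n : ℕ) : qPoch 0 q n = 1 := by
  simp [qPoch]

lemma qPoch_sq (n : ℕ) : qPoch (x ^ 2) (q ^ 2) n = qPoch x q n * qPoch (-x) q n := by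
  simp only [qPoch, ← prod_mul_distrib]
  exact prod_congr rfl fun i _ => by ring

variable {x q}

lemma qPoch_ne_zero (h : ∀ i < n, x * q ^ i ≠ 1) : qPoch x q n ≠ 0 :=
  prod_ne_zero_iff.2 fun i hi => sub_ne_zero.2 (h i (mem_range.1 hi)).symm

lemma qPoch_ne_zero_of_le (h : qPoch x q n ≠ 0) (hmn : m ≤ n) : qPoch x q m ≠ 0 := by
  rw [← Nat.add_sub_cancel' hmn, qPoch_add] at h
  exact left_ne_zero_of_mul h

end QPochhammer

section GaussianBinomial

variable (q : ℂ)

lemma gb_zero_right (n : ℕ) : gb q n 0 = 1 := by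
  cases n <;> rfl

lemma gb_eq_zero_of_lt {n k : ℕ} (h : n < k) : gb q n k = 0 := by
  induction n generalizing k with
  | zero => obtain ⟨k, rfl⟩ := Nat.exists_eq_succ_of_ne_zero h.ne'; rfl
  | succ n ih =>
    obtain ⟨k, rfl⟩ := Nat.exists_eq_succ_of_ne_zero (Nat.ne_zero_of_lt h)
    simp only [gb, ih (Nat.lt_of_succ_lt_succ h), ih (Nat.lt_of_succ_lt h), mul_zero, add_zero]

lemma gb_succ_mul (n k : ℕ) :
    gb q n (k + 1) * (1 - q ^ (k + 1)) = gb q n k * (1 - q ^ (n - k)) := by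
  induction n generalizing k with
  | zero => simp [gb]
  | succ n ih =>
    cases k with
    | zero =>
      have h := ih 0
      simp only [gb, gb_zero_right, Nat.sub_zero, zero_add, pow_succ] at h ⊢
      linear_combination q * h
    | succ k =>
      rcases le_or_gt n k with hnk | hkn
      · rw [Nat.sub_eq_zero_of_le (Nat.succ_le_succ hnk), gb_eq_zero_of_lt q (by lia)]
        ring
      · obtain ⟨d, rfl⟩ := Nat.exists_eq_add_of_lt hkn
        have hk := ih k
        have hk' := ih (k + 1)
        simp only [gb, show k + d + 1 - k = d + 1 by lia, show k + d + 1 - (k + 1) = d by lia,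
          show k + d + 1 + 1 - (k + 1) = d + 1 by lia] at hk hk' ⊢
        linear_combination hk + q ^ (k + 2) * hk'

lemma gb_mul_qPoch_mul_qPoch {n k : ℕ} (h : k ≤ n) :
    gb q n k * qPoch q q k * qPoch q q (n - k) = qPoch q q n := by
  induction k with
  | zero => rw [gb_zero_right, qPoch_zero, Nat.sub_zero, one_mul, one_mul]
  | succ k ih =>
    obtain ⟨d, rfl⟩ := Nat.exists_eq_add_of_lt h
    have habs := gb_succ_mul q (k + d + 1) k
    rw [← ih (by lia), show k + d + 1 - (k + 1) = d by lia, qPoch_succ]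
    rw [show k + d + 1 - k = d + 1 by lia] at habs ⊢
    rw [qPoch_succ q q d]
    linear_combination qPoch q q k * qPoch q q d * habs

lemma gb_eq_div {n k : ℕ} (hq : qPoch q q n ≠ 0) (h : k ≤ n) :
    gb q n k = qPoch q q n / (qPoch q q k * qPoch q q (n - k)) := by
  have hk := qPoch_ne_zero_of_le hq h
  have hnk := qPoch_ne_zero_of_le hq (Nat.sub_le n k)
  rw [eq_div_iff (mul_ne_zero hk hnk), ← mul_assoc, gb_mul_qPoch_mul_qPoch q h]

lemma sum_gb_succ_mul (n : ℕ) (f : ℕ → ℂ) :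
    ∑ j ∈ range (n + 2), gb q (n + 1) j * f j =
      ∑ j ∈ range (n + 1), gb q n j * (f (j + 1) + q ^ j * f j) := by
  have hshift : ∑ j ∈ range (n + 1), q ^ (j + 1) * gb q n (j + 1) * f (j + 1) + f 0 =
      ∑ j ∈ range (n + 1), q ^ j * gb q n j * f j := by
    have h := sum_range_succ' (fun j => q ^ j * gb q n j * f j) (n + 1)
    rw [sum_range_succ, gb_eq_zero_of_lt q n.lt_succ_self] at h
    simpa [gb_zero_right] using h.symm
  rw [sum_range_succ', gb_zero_right, one_mul]
  simp only [gb, add_mul, sum_add_distrib]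
  rw [add_assoc, hshift, ← sum_add_distrib]
  exact sum_congr rfl fun j _ => by ring

end GaussianBinomial

section Vandermonde

/-- The polynomial form of `(c/d;q)_m (-d)^m q^{m(m-1)/2}`, which remains meaningful at `d = 0`.
With `c = a q` it is the factor attached to `β_m` in Bailey's lemma relative to `a` with
`ρ₁ → ∞` and `ρ₂ = c/d`. -/
noncomputable def baileyWeight (q c d : ℂ) (m : ℕ) : ℂ :=
  ∏ i ∈ range m, q ^ i * (c * q ^ i - d)

variable (q c d : ℂ)

lemma baileyWeight_zero : baileyWeight q c d 0 = 1 :=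
  prod_range_zero _

lemma baileyWeight_succ (m : ℕ) :
    baileyWeight q c d (m + 1) = baileyWeight q c d m * (q ^ m * (c * q ^ m - d)) :=
  prod_range_succ _ m

lemma baileyWeight_add (m n : ℕ) :
    baileyWeight q c d (m + n) =
      baileyWeight q c d m * baileyWeight q (c * q ^ (2 * m)) (d * q ^ m) n := by
  simp only [baileyWeight, prod_range_add]
  congr 1
  exact prod_congr rfl fun i _ => by ring

lemma baileyWeight_mul_mul (t : ℂ) (m : ℕ) :
    baileyWeight q (c * t) (d * t) m = t ^ m * baileyWeight q c d m := by
  induction m with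
  | zero => simp [baileyWeight_zero]
  | succ m ih => rw [baileyWeight_succ, baileyWeight_succ, ih]; ring

/-- The `q`-Chu–Vandermonde sum, with denominators cleared. -/
theorem sum_gb_mul_baileyWeight_mul_qPoch (n : ℕ) :
    ∑ j ∈ range (n + 1), gb q n j * (baileyWeight q c d j * qPoch (c * q ^ j) q (n - j)) =
      qPoch d q n := by
  induction n generalizing c d with
  | zero => simp [gb, qPoch_zero, baileyWeight_zero]
  | succ n ih =>
    rw [sum_gb_succ_mul, qPoch_succ', ← ih (c * q) (d * q), mul_sum]
    refine sum_congr rfl fun j hj => ?_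
    have hjn : j ≤ n := mem_range_succ_iff.1 hj
    rw [baileyWeight_succ, baileyWeight_mul_mul, Nat.add_sub_add_right, Nat.succ_sub hjn,
      qPoch_succ', show c * q ^ (j + 1) = c * q * q ^ j by ring,
      show c * q ^ j * q = c * q * q ^ j by ring]
    ring

lemma sum_baileyWeight_div {n : ℕ} (hq : qPoch q q n ≠ 0) (hc : qPoch c q n ≠ 0) :
    ∑ j ∈ range (n + 1), baileyWeight q c d j / (qPoch q q (n - j) * qPoch q q j * qPoch c q j) =
      qPoch d q n / (qPoch q q n * qPoch c q n) := by
  rw [← sum_gb_mul_baileyWeight_mul_qPoch q c d n, sum_div]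
  refine sum_congr rfl fun j hj => ?_
  have hjn : j ≤ n := mem_range_succ_iff.1 hj
  have hsplit : qPoch c q n = qPoch c q j * qPoch (c * q ^ j) q (n - j) := by
    rw [← qPoch_add, Nat.add_sub_cancel' hjn]
  rw [gb_eq_div q hq hjn, hsplit]
  rw [hsplit] at hc
  have := left_ne_zero_of_mul hc
  have := right_ne_zero_of_mul hc
  field_simp

end Vandermonde

section BaileyLemma

/-- The sequence `β` for which `(α, β)` is a Bailey pair relative to `a`. -/
noncomputable def baileyTransform (a q : ℂ) (α : ℕ → ℂ) (n : ℕ) : ℂ :=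
  ∑ r ∈ range (n + 1), α r / (qPoch q q (n - r) * qPoch (a * q) q (n + r))

lemma sum_range_succ_sum_range_succ {M : Type*} [AddCommMonoid M] (n : ℕ) (f : ℕ → ℕ → M) :
    ∑ m ∈ range (n + 1), ∑ r ∈ range (m + 1), f m r =
      ∑ r ∈ range (n + 1), ∑ j ∈ range (n - r + 1), f (r + j) r := by
  simp only [range_eq_Ico]
  rw [← sum_Ico_Ico_comm]
  refine sum_congr rfl fun r hr => ?_
  have hrn : r ≤ n := Nat.le_of_lt_succ (mem_Ico.1 hr).2
  rw [sum_Ico_eq_sum_range, ← range_eq_Ico, Nat.sub_add_comm hrn]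

variable (a q : ℂ) (α : ℕ → ℂ) {n : ℕ}

/-- Bailey's lemma in the limit `ρ₁ → ∞`, with `d = a q / ρ₂`. -/
theorem sum_baileyWeight_mul_baileyTransform (d : ℂ) (hq : qPoch q q n ≠ 0)
    (ha : qPoch (a * q) q (2 * n) ≠ 0) :
    ∑ m ∈ range (n + 1), baileyWeight q (a * q) d m / qPoch q q (n - m) * baileyTransform a q α m =
      baileyTransform a q
        (fun r => baileyWeight q (a * q) d r * qPoch (d * q ^ r) q (n - r) * α r) n := by
  simp only [baileyTransform, mul_sum]
  rw [sum_range_succ_sum_range_succ]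
  refine sum_congr rfl fun r hr => ?_
  have hrn : r ≤ n := mem_range_succ_iff.1 hr
  have hsplit : qPoch (a * q) q (n + r) =
      qPoch (a * q) q (2 * r) * qPoch (a * q * q ^ (2 * r)) q (n - r) := by
    rw [← qPoch_add, show 2 * r + (n - r) = n + r by lia]
  have hnr : qPoch (a * q) q (n + r) ≠ 0 := qPoch_ne_zero_of_le ha (by lia)
  have hinner := sum_baileyWeight_div q (a * q * q ^ (2 * r)) (d * q ^ r)
    (qPoch_ne_zero_of_le hq (Nat.sub_le n r)) (right_ne_zero_of_mul (hsplit ▸ hnr))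
  calc _ = ∑ j ∈ range (n - r + 1), baileyWeight q (a * q) d r * α r / qPoch (a * q) q (2 * r) *
          (baileyWeight q (a * q * q ^ (2 * r)) (d * q ^ r) j /
            (qPoch q q (n - r - j) * qPoch q q j * qPoch (a * q * q ^ (2 * r)) q j)) := by
        refine sum_congr rfl fun j _ => ?_
        rw [baileyWeight_add, show r + j + r = 2 * r + j by ring, qPoch_add,
          Nat.add_sub_cancel_left, Nat.sub_sub]
        simp only [div_eq_mul_inv, mul_inv]
        ring
    _ = _ := by
        rw [← mul_sum, hinner, hsplit]
        simp only [div_eq_mul_inv, mul_inv]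
        ring

lemma baileyWeight_zero_right (m : ℕ) : baileyWeight q (a * q) 0 m = a ^ m * q ^ m ^ 2 := by
  induction m with
  | zero => simp [baileyWeight_zero]
  | succ m ih => rw [baileyWeight_succ, ih]; ring

lemma baileyWeight_neg_self (m : ℕ) :
    baileyWeight q (a * q) (-q) m = q ^ (m + 1).choose 2 * qPoch (-a) q m := by
  induction m with
  | zero => simp [baileyWeight_zero, qPoch_zero]
  | succ m ih =>
    rw [baileyWeight_succ, ih, qPoch_succ, Nat.choose_succ_succ' (m + 1) 1, Nat.choose_one_right]
    ring

lemma baileyWeight_neg_mul_qPoch {m : ℕ} (h : m ≤ n) :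
    baileyWeight q (a * q) (-a * q ^ (n + 1)) m * qPoch (-q) q (n - m) =
      a ^ m * q ^ m ^ 2 * qPoch (-q) q n := by
  induction m with
  | zero => simp [baileyWeight_zero]
  | succ m ih =>
    obtain ⟨e, rfl⟩ := Nat.exists_eq_add_of_lt h
    have ih' := ih (by lia)
    rw [show m + e + 1 - m = e + 1 by lia, qPoch_succ] at ih'
    rw [baileyWeight_succ, show m + e + 1 - (m + 1) = e by lia]
    linear_combination a * q ^ (2 * m + 1) * ih'

lemma sum_mul_baileyTransform (hq : qPoch q q n ≠ 0) (ha : qPoch (a * q) q (2 * n) ≠ 0) :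
    ∑ m ∈ range (n + 1), a ^ m * q ^ m ^ 2 / qPoch q q (n - m) * baileyTransform a q α m =
      baileyTransform a q (fun r => a ^ r * q ^ r ^ 2 * α r) n := by
  simpa only [baileyWeight_zero_right, zero_mul, qPoch_zero_left, mul_one] using
    sum_baileyWeight_mul_baileyTransform a q α 0 hq ha

lemma sum_mul_baileyTransform_sq (hq : qPoch (q ^ 2) (q ^ 2) n ≠ 0)
    (ha : qPoch ((a * q) ^ 2) (q ^ 2) (2 * n) ≠ 0) :
    ∑ m ∈ range (n + 1),
        a ^ m * q ^ m ^ 2 / qPoch (q ^ 2) (q ^ 2) (n - m) * baileyTransform a q α m =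
      ∑ r ∈ range (n + 1), a ^ r * q ^ r ^ 2 * α r * qPoch (-(a * q)) q (2 * n) /
        (qPoch (q ^ 2) (q ^ 2) (n - r) * qPoch ((a * q) ^ 2) (q ^ 2) (n + r)) := by
  rw [qPoch_sq] at hq ha
  have hneg := right_ne_zero_of_mul hq
  have hweight : ∀ m ∈ range (n + 1), a ^ m * q ^ m ^ 2 / qPoch (q ^ 2) (q ^ 2) (n - m) =
      baileyWeight q (a * q) (-a * q ^ (n + 1)) m / qPoch q q (n - m) / qPoch (-q) q n := by
    intro m hm
    have hnm := qPoch_ne_zero_of_le hneg (Nat.sub_le n m)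
    rw [qPoch_sq, ← mul_div_mul_right _ _ hneg,
      ← baileyWeight_neg_mul_qPoch a q (mem_range_succ_iff.1 hm)]
    field_simp
  calc _ = (∑ m ∈ range (n + 1), baileyWeight q (a * q) (-a * q ^ (n + 1)) m /
          qPoch q q (n - m) * baileyTransform a q α m) / qPoch (-q) q n := by
        rw [sum_div]
        exact sum_congr rfl fun m hm => by rw [hweight m hm]; ring
    _ = _ := by
        rw [sum_baileyWeight_mul_baileyTransform a q α _ (left_ne_zero_of_mul hq)
          (left_ne_zero_of_mul ha), baileyTransform, sum_div]
        refine sum_congr rfl fun r hr => ?_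
        have hrn : r ≤ n := mem_range_succ_iff.1 hr
        have hsplit : qPoch (-(a * q)) q (2 * n) =
            qPoch (-(a * q)) q (n + r) * qPoch (-a * q ^ (n + 1) * q ^ r) q (n - r) := by
          rw [show -a * q ^ (n + 1) * q ^ r = -(a * q) * q ^ (n + r) by ring, ← qPoch_add,
            show n + r + (n - r) = 2 * n by lia]
        have hnr := qPoch_ne_zero_of_le (right_ne_zero_of_mul ha) (show n + r ≤ 2 * n by lia)
        have hquot : qPoch (-(a * q)) q (2 * n) / qPoch ((a * q) ^ 2) (q ^ 2) (n + r) =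
            qPoch (-a * q ^ (n + 1) * q ^ r) q (n - r) / qPoch (a * q) q (n + r) := by
          rw [hsplit, qPoch_sq, mul_comm (qPoch (a * q) q _), mul_div_mul_left _ _ hnr]
        linear_combination a ^ r * q ^ r ^ 2 / qPoch (q ^ 2) (q ^ 2) (n - r) * α r * -hquot -
          α r * qPoch (-a * q ^ (n + 1) * q ^ r) q (n - r) / qPoch (a * q) q (n + r) * hweight r hr

end BaileyLemma

section BaileyPairs

variable (a z q : ℂ) {n : ℕ}

/-- The `α`-sequence of the unit Bailey pair, whose `β`-sequence is `1, 0, 0, …`. -/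
noncomputable def unitBaileyAlpha (a q : ℂ) (r : ℕ) : ℂ :=
  (-1) ^ r * q ^ r.choose 2 * qPoch a q r * (1 - a * q ^ (2 * r)) / (qPoch q q r * (1 - a))

lemma sum_range_succ_gb_mul_qPoch (k n : ℕ) (ha : qPoch a q (n + k + 2) ≠ 0) :
    ∑ r ∈ range (k + 1), (-1) ^ r * q ^ r.choose 2 * gb q (n + 1) r * qPoch a q r *
        (1 - a * q ^ (2 * r)) / qPoch a q (n + r + 2) =
      (-1) ^ k * q ^ (k + 1).choose 2 * gb q n k * qPoch a q (k + 1) /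
        qPoch a q (n + k + 2) := by
  induction k with
  | zero => simp [gb_zero_right, qPoch_succ, qPoch_zero]
  | succ k ih =>
    have habs := gb_succ_mul q n k
    have hpow : gb q n k * q ^ (n - k) * q ^ k = gb q n k * q ^ n := by
      rcases le_or_gt k n with hkn | hnk
      · rw [mul_assoc, ← pow_add, Nat.sub_add_cancel hkn]
      · simp [gb_eq_zero_of_lt q hnk]
    rw [show n + (k + 1) + 2 = n + k + 2 + 1 by ring, qPoch_succ a q (n + k + 2)] at ha ⊢
    have h₁ := left_ne_zero_of_mul ha
    have h₂ := right_ne_zero_of_mul ha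
    rw [sum_range_succ, ih h₁, show n + (k + 1) + 2 = n + k + 2 + 1 by ring,
      qPoch_succ a q (n + k + 2), qPoch_succ a q (k + 1), Nat.choose_succ_succ' (k + 1) 1,
      Nat.choose_one_right, ← mul_div_mul_right _ _ h₂, ← add_div]
    congr 1
    simp only [gb]
    linear_combination (-1) ^ k * q ^ ((k + 1).choose 2 + k + 2) * qPoch a q (k + 1) * a *
      (hpow - q ^ k * habs)

lemma baileyTransform_unitBaileyAlpha (hq : qPoch q q n ≠ 0) (ha : qPoch a q (2 * n + 1) ≠ 0) :
    baileyTransform a q (unitBaileyAlpha a q) n = if n = 0 then 1 else 0 := by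
  have hterm : baileyTransform a q (unitBaileyAlpha a q) n =
      (∑ r ∈ range (n + 1), (-1) ^ r * q ^ r.choose 2 * gb q n r * qPoch a q r *
        (1 - a * q ^ (2 * r)) / qPoch a q (n + r + 1)) / qPoch q q n := by
    rw [baileyTransform, sum_div]
    refine sum_congr rfl fun r hr => ?_
    rw [gb_eq_div q hq (mem_range_succ_iff.1 hr), qPoch_succ' a, unitBaileyAlpha]
    field_simp
  rw [hterm]
  cases n with
  | zero =>
    rw [qPoch_succ, qPoch_zero] at ha
    simp_all [gb, qPoch_zero, qPoch_succ]
  | succ n =>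
    have h := sum_range_succ_gb_mul_qPoch a q (n + 1) n (qPoch_ne_zero_of_le ha (by lia))
    rw [gb_eq_zero_of_lt q n.lt_succ_self] at h
    simp only [show ∀ r, n + 1 + r + 1 = n + r + 2 by lia, h]
    simp

/-- The `α`-sequence obtained from the Bailey pair with `β_n = 1 / (q²;q²)_n` relative to `z`
by `k` steps of the Bailey chain. -/
noncomputable def kawanakaAlpha (z q : ℂ) (k r : ℕ) : ℂ :=
  (-1) ^ r * z ^ (k * r) * q ^ ((k + 1) * r ^ 2) * qPoch (z ^ 2) (q ^ 2) r *
    (1 - z * q ^ (2 * r)) / (qPoch (q ^ 2) (q ^ 2) r * (1 - z))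

lemma succ_choose_two_add_choose_two (r : ℕ) : (r + 1).choose 2 + r.choose 2 = r ^ 2 := by
  induction r with
  | zero => rfl
  | succ r ih =>
    have hr : (r + 1).choose 2 = r + r.choose 2 := by
      rw [Nat.choose_succ_succ' r 1, Nat.choose_one_right]
    rw [Nat.choose_succ_succ' (r + 1) 1, Nat.choose_one_right]
    linear_combination hr + ih

lemma baileyWeight_neg_mul_unitBaileyAlpha {r : ℕ} (hr : qPoch (-q) q r ≠ 0) :
    baileyWeight q (z * q) (-q) r * unitBaileyAlpha z q r =
      qPoch (-q) q r * kawanakaAlpha z q 0 r := by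
  rw [baileyWeight_neg_self, unitBaileyAlpha, kawanakaAlpha, qPoch_sq, qPoch_sq, zero_mul,
    pow_zero, zero_add, one_mul, ← succ_choose_two_add_choose_two r, pow_add]
  field_simp

lemma baileyTransform_kawanakaAlpha_zero (hq : qPoch (q ^ 2) (q ^ 2) n ≠ 0)
    (hz : qPoch z q (2 * n + 1) ≠ 0) :
    baileyTransform z q (kawanakaAlpha z q 0) n = 1 / qPoch (q ^ 2) (q ^ 2) n := by
  rw [qPoch_sq] at hq
  have hpos := left_ne_zero_of_mul hq
  have hneg := right_ne_zero_of_mul hq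
  have hzq : qPoch (z * q) q (2 * n) ≠ 0 := by
    rw [qPoch_succ'] at hz
    exact right_ne_zero_of_mul hz
  have hbailey := sum_baileyWeight_mul_baileyTransform z q (unitBaileyAlpha z q) (-q) hpos hzq
  have hunit : ∑ m ∈ range (n + 1), baileyWeight q (z * q) (-q) m / qPoch q q (n - m) *
      baileyTransform z q (unitBaileyAlpha z q) m = 1 / qPoch q q n := by
    rw [sum_eq_single_of_mem 0 (mem_range.2 n.succ_pos) fun m hm hm0 => ?_]
    · rw [baileyTransform_unitBaileyAlpha z q (qPoch_ne_zero_of_le hpos n.zero_le)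
        (qPoch_ne_zero_of_le hz (by lia)), if_pos rfl, mul_one, baileyWeight_zero, Nat.sub_zero]
    · have hmn : m ≤ n := mem_range_succ_iff.1 hm
      rw [baileyTransform_unitBaileyAlpha z q (qPoch_ne_zero_of_le hpos hmn)
        (qPoch_ne_zero_of_le hz (by lia)), if_neg hm0, mul_zero]
  have hscale : baileyTransform z q
      (fun r => baileyWeight q (z * q) (-q) r * qPoch (-q * q ^ r) q (n - r) *
        unitBaileyAlpha z q r) n =
      qPoch (-q) q n * baileyTransform z q (kawanakaAlpha z q 0) n := by
    rw [baileyTransform, baileyTransform, mul_sum]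
    refine sum_congr rfl fun r hr => ?_
    have hrn : r ≤ n := mem_range_succ_iff.1 hr
    have hα := baileyWeight_neg_mul_unitBaileyAlpha z q (qPoch_ne_zero_of_le hneg hrn)
    rw [mul_right_comm, hα, mul_right_comm, ← qPoch_add, Nat.add_sub_cancel' hrn, mul_div_assoc]
  rw [qPoch_sq, eq_div_iff (mul_ne_zero hpos hneg)]
  rw [hscale, hunit, div_eq_iff hpos] at hbailey
  linear_combination -hbailey

lemma sum_mul_baileyTransform_kawanakaAlpha (k : ℕ) (hq : qPoch q q n ≠ 0)
    (hz : qPoch (z * q) q (2 * n) ≠ 0) :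
    ∑ m ∈ range (n + 1), z ^ m * q ^ m ^ 2 / qPoch q q (n - m) *
        baileyTransform z q (kawanakaAlpha z q k) m =
      baileyTransform z q (kawanakaAlpha z q (k + 1)) n := by
  rw [sum_mul_baileyTransform z q _ hq hz]
  congr 1
  funext r
  simp only [kawanakaAlpha]
  ring

lemma qPoch_div_qPoch_sq {r : ℕ} (hr : r ≤ n) (hz : qPoch (z ^ 2) (q ^ 2) (2 * n + 1) ≠ 0) :
    qPoch (-z) q (2 * n + 1) / qPoch (z ^ 2 * q ^ (2 * r)) (q ^ 2) (n + 1) =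
      qPoch (z ^ 2) (q ^ 2) r * qPoch (-(z * q)) q (2 * n) /
        ((1 - z) * qPoch ((z * q) ^ 2) (q ^ 2) (n + r)) := by
  have hsplit : qPoch (z ^ 2) (q ^ 2) (n + r + 1) =
      qPoch (z ^ 2) (q ^ 2) r * qPoch (z ^ 2 * q ^ (2 * r)) (q ^ 2) (n + 1) := by
    rw [show n + r + 1 = r + (n + 1) by ring, qPoch_add, ← pow_mul]
  have hsplit' : qPoch (z ^ 2) (q ^ 2) (n + r + 1) =
      (1 + z) * ((1 - z) * qPoch ((z * q) ^ 2) (q ^ 2) (n + r)) := by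
    rw [qPoch_succ', ← mul_pow]
    ring
  have hne : qPoch (z ^ 2) (q ^ 2) (n + r + 1) ≠ 0 := qPoch_ne_zero_of_le hz (by lia)
  rw [div_eq_div_iff (right_ne_zero_of_mul (hsplit ▸ hne)) (right_ne_zero_of_mul (hsplit' ▸ hne)),
    mul_right_comm (qPoch (z ^ 2) (q ^ 2) r), ← hsplit, hsplit', qPoch_succ', neg_mul]
  ring

lemma sum_mul_baileyTransform_kawanakaAlpha_sq (k : ℕ) (hq : qPoch (q ^ 2) (q ^ 2) n ≠ 0)
    (hz : qPoch (z ^ 2) (q ^ 2) (2 * n + 1) ≠ 0) :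
    ∑ m ∈ range (n + 1), qPoch (q ^ 2) (q ^ 2) n / qPoch (q ^ 2) (q ^ 2) (n - m) *
        (z ^ m * q ^ m ^ 2) * baileyTransform z q (kawanakaAlpha z q k) m =
      ∑ r ∈ range (n + 1), (-1) ^ r * z ^ ((k + 1) * r) * q ^ ((k + 2) * r ^ 2) *
        gb (q ^ 2) n r *
        (qPoch (-z) q (2 * n + 1) / qPoch (z ^ 2 * q ^ (2 * r)) (q ^ 2) (n + 1)) *
        (1 - z * q ^ (2 * r)) := by
  have hzq : qPoch ((z * q) ^ 2) (q ^ 2) (2 * n) ≠ 0 := by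
    rw [qPoch_succ', ← mul_pow] at hz
    exact right_ne_zero_of_mul hz
  calc _ = qPoch (q ^ 2) (q ^ 2) n * ∑ m ∈ range (n + 1),
        z ^ m * q ^ m ^ 2 / qPoch (q ^ 2) (q ^ 2) (n - m) *
          baileyTransform z q (kawanakaAlpha z q k) m := by
        rw [mul_sum]
        exact sum_congr rfl fun m _ => by ring
    _ = _ := by
        rw [sum_mul_baileyTransform_sq z q _ hq hzq, mul_sum]
        refine sum_congr rfl fun r hr => ?_
        have hrn : r ≤ n := mem_range_succ_iff.1 hr
        rw [qPoch_div_qPoch_sq z q hrn hz, gb_eq_div (q ^ 2) hq hrn, kawanakaAlpha]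
        simp only [div_eq_mul_inv, mul_inv]
        ring

end BaileyPairs

namespace PartK

variable {k : ℕ}

/-- The partition `(λ₂, λ₃, …)` left after removing the largest part of `(λ₁, λ₂, …)`. -/
def tail (l : PartK (k + 1)) : PartK k :=
  ⟨fun i => l.1 (i + 1), fun _ _ hij => l.2.1 (Nat.succ_le_succ hij),
    fun i hi => l.2.2 (i + 1) (Nat.succ_le_succ hi)⟩

/-- The partition `(m, μ₁, μ₂, …)`. -/
def cons (m : ℕ) (mu : PartK k) (h : mu.1 0 ≤ m) : PartK (k + 1) :=
  ⟨fun i => i.casesOn m mu.1,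
    antitone_nat_of_succ_le fun i => by
      cases i with
      | zero => exact h
      | succ i => exact mu.2.1 i.le_succ,
    fun i hi => by
      cases i with
      | zero => exact absurd hi (Nat.not_succ_le_zero k)
      | succ i => exact mu.2.2 i (Nat.le_of_succ_le_succ hi)⟩

lemma cons_tail (l : PartK (k + 1)) : cons (l.1 0) l.tail (l.2.1 (Nat.zero_le 1)) = l := by
  refine Subtype.ext (funext fun i => ?_)
  cases i <;> rfl

lemma wtK_succ (l : PartK (k + 1)) : wtK (k + 1) l = wtK k l.tail + l.1 0 :=
  sum_range_succ' _ k

lemma n2K_succ (l : PartK (k + 1)) : n2K (k + 1) l = n2K k l.tail + l.1 0 ^ 2 :=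
  sum_range_succ' _ k

lemma pochK_succ (x q : ℂ) (l : PartK (k + 1)) :
    pochK x q (k + 1) l = pochK x q k l.tail * qPoch x q (l.1 0 - l.1 1) :=
  prod_range_succ' _ k

instance : Unique (PartK 0) where
  default := ⟨0, antitone_const, fun _ _ => rfl⟩
  uniq l := Subtype.ext (funext fun i => l.2.2 i i.zero_le)

lemma finite_setOf_le (k n : ℕ) : {l : PartK k | l.1 0 ≤ n}.Finite := by
  refine Set.Finite.of_injOn (f := fun l (i : Fin k) => l.1 i)
    (t := {v : Fin k → ℕ | ∀ i, v i ∈ Set.Iic n}) (fun l hl i => (l.2.1 (Nat.zero_le i)).trans hl)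
    (fun l _ l' _ hll' => ?_) (Set.Finite.pi' fun _ => Set.finite_Iic n)
  refine Subtype.ext (funext fun i => ?_)
  rcases lt_or_ge i k with hik | hki
  · exact congrFun hll' ⟨i, hik⟩
  · rw [l.2.2 i hki, l'.2.2 i hki]

/-- The partitions with at most `k` parts, all of them at most `n`. -/
noncomputable def partsLE (k n : ℕ) : Finset (PartK k) :=
  (finite_setOf_le k n).toFinset

lemma mem_partsLE {n : ℕ} {l : PartK k} : l ∈ partsLE k n ↔ l.1 0 ≤ n :=
  Set.Finite.mem_toFinset _

lemma partsLE_zero (n : ℕ) : partsLE 0 n = {default} :=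
  eq_singleton_iff_unique_mem.2 ⟨mem_partsLE.2 n.zero_le, fun l _ => Subsingleton.elim l default⟩

lemma sum_partsLE_succ {M : Type*} [AddCommMonoid M] (n : ℕ) (f : ℕ → PartK k → M) :
    ∑ l ∈ partsLE (k + 1) n, f (l.1 0) l.tail =
      ∑ m ∈ range (n + 1), ∑ mu ∈ partsLE k m, f m mu := by
  rw [sum_sigma']
  refine sum_bij' (fun l _ => ⟨l.1 0, l.tail⟩)
    (fun p hp => cons p.1 p.2 (mem_partsLE.1 (mem_sigma.1 hp).2)) (fun l hl => ?_)
    (fun p hp => ?_) (fun l _ => l.cons_tail) (fun _ _ => rfl) (fun _ _ => rfl)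
  · exact mem_sigma.2 ⟨mem_range_succ_iff.2 (mem_partsLE.1 hl),
      mem_partsLE.2 (l.2.1 (Nat.zero_le 1))⟩
  · exact mem_partsLE.2 (mem_range_succ_iff.1 (mem_sigma.1 hp).1)

lemma tsum_mul_ite_le (n : ℕ) (f g : PartK k → ℂ) :
    ∑' l, f l * (if l.1 0 ≤ n then g l else 0) = ∑ l ∈ partsLE k n, f l * g l := by
  rw [tsum_eq_sum (s := partsLE k n) fun l hl => by rw [if_neg (mt mem_partsLE.2 hl), mul_zero]]
  exact sum_congr rfl fun l hl => by rw [if_pos (mem_partsLE.1 hl)]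

end PartK

section KawanakaSum

open PartK

variable (q z : ℂ)

/-- The summand of the Kawanaka-type identity without the factor `(q²;q²)_n / (q²;q²)_{n-λ₁}`,
the only one that depends on `n`. -/
noncomputable def kawanakaWeight (k : ℕ) (l : PartK k) : ℂ :=
  (∏ i ∈ range (k - 1), qPoch (-q) q (l.1 i - l.1 (i + 1))) * z ^ wtK k l * q ^ n2K k l /
    pochK (q ^ 2) (q ^ 2) k l

lemma kawanakaWeight_one (l : PartK 1) :
    kawanakaWeight q z 1 l = z ^ l.1 0 * q ^ l.1 0 ^ 2 / qPoch (q ^ 2) (q ^ 2) (l.1 0) := by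
  simp [kawanakaWeight, wtK, n2K, pochK, l.2.2 1 le_rfl]

lemma kawanakaWeight_succ_succ (k : ℕ) (l : PartK (k + 2))
    (hq : qPoch (-q) q (l.1 0 - l.1 1) ≠ 0) :
    kawanakaWeight q z (k + 2) l =
      z ^ l.1 0 * q ^ l.1 0 ^ 2 / qPoch q q (l.1 0 - l.tail.1 0) *
        kawanakaWeight q z (k + 1) l.tail := by
  have hprod : ∏ i ∈ range (k + 1), qPoch (-q) q (l.1 i - l.1 (i + 1)) =
      (∏ i ∈ range k, qPoch (-q) q (l.tail.1 i - l.tail.1 (i + 1))) *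
        qPoch (-q) q (l.1 0 - l.1 1) := prod_range_succ' _ k
  rw [kawanakaWeight, kawanakaWeight, show k + 2 - 1 = k + 1 from rfl, hprod, wtK_succ, n2K_succ,
    pochK_succ, qPoch_sq q q (l.1 0 - l.1 1), show l.tail.1 0 = l.1 1 from rfl, Nat.add_sub_cancel,
    pow_add, pow_add]
  field_simp

theorem sum_mul_kawanakaWeight (k n : ℕ) (g : ℕ → ℂ) (hq : qPoch (q ^ 2) (q ^ 2) n ≠ 0)
    (hz : qPoch z q (2 * n + 1) ≠ 0) :
    ∑ l ∈ partsLE (k + 1) n, g (l.1 0) * kawanakaWeight q z (k + 1) l =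
      ∑ m ∈ range (n + 1),
        g m * (z ^ m * q ^ m ^ 2) * baileyTransform z q (kawanakaAlpha z q k) m := by
  induction k generalizing n g with
  | zero =>
    calc _ = ∑ l ∈ partsLE 1 n,
          g (l.1 0) * (z ^ l.1 0 * q ^ l.1 0 ^ 2 / qPoch (q ^ 2) (q ^ 2) (l.1 0)) :=
          sum_congr rfl fun l _ => congrArg (g (l.1 0) * ·) (kawanakaWeight_one q z l)
      _ = ∑ m ∈ range (n + 1), ∑ _mu ∈ partsLE 0 m,
          g m * (z ^ m * q ^ m ^ 2 / qPoch (q ^ 2) (q ^ 2) m) :=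
          sum_partsLE_succ n fun m _ => g m * (z ^ m * q ^ m ^ 2 / qPoch (q ^ 2) (q ^ 2) m)
      _ = _ := by
          refine sum_congr rfl fun m hm => ?_
          have hmn : m ≤ n := mem_range_succ_iff.1 hm
          rw [partsLE_zero, sum_singleton, baileyTransform_kawanakaAlpha_zero z q
            (qPoch_ne_zero_of_le hq hmn) (qPoch_ne_zero_of_le hz (by lia))]
          ring
  | succ k ih =>
    have hneg : qPoch (-q) q n ≠ 0 := right_ne_zero_of_mul (qPoch_sq q q n ▸ hq)
    calc _ = ∑ l ∈ partsLE (k + 2) n, g (l.1 0) * (z ^ l.1 0 * q ^ l.1 0 ^ 2) *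
          ((1 / qPoch q q (l.1 0 - l.tail.1 0)) * kawanakaWeight q z (k + 1) l.tail) := by
          refine sum_congr rfl fun l hl => ?_
          have hle : l.1 0 - l.1 1 ≤ n := (Nat.sub_le _ _).trans (mem_partsLE.1 hl)
          rw [kawanakaWeight_succ_succ q z k l (qPoch_ne_zero_of_le hneg hle)]
          ring
      _ = ∑ m ∈ range (n + 1), g m * (z ^ m * q ^ m ^ 2) * ∑ mu ∈ partsLE (k + 1) m,
          1 / qPoch q q (m - mu.1 0) * kawanakaWeight q z (k + 1) mu := by
          simp only [mul_sum]
          exact sum_partsLE_succ n fun m mu => g m * (z ^ m * q ^ m ^ 2) *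
            ((1 / qPoch q q (m - mu.1 0)) * kawanakaWeight q z (k + 1) mu)
      _ = _ := by
          refine sum_congr rfl fun m hm => ?_
          have hmn : m ≤ n := mem_range_succ_iff.1 hm
          have hqm := qPoch_ne_zero_of_le hq hmn
          have hzm : qPoch z q (2 * m + 1) ≠ 0 := qPoch_ne_zero_of_le hz (by lia)
          rw [ih m (fun j => 1 / qPoch q q (m - j)) hqm hzm,
            ← sum_mul_baileyTransform_kawanakaAlpha z q k
              (left_ne_zero_of_mul (qPoch_sq q q m ▸ hqm))
              (right_ne_zero_of_mul (qPoch_succ' z q (2 * m) ▸ hzm))]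
          simp only [one_div_mul_eq_div]

end KawanakaSum

theorem kawanaka_finite_general (k : ℕ) (hk : 1 ≤ k) (n : ℕ) (q z : ℂ)
    (hq : ∀ j : ℕ, 1 ≤ j → j ≤ n → q ^ (2 * j) ≠ 1)
    (hz : ∀ j : ℕ, j ≤ 2 * n → z ^ 2 * q ^ (2 * j) ≠ 1) :
    ∑' lam : PartK k,
        (∏ i ∈ range (k - 1), qPoch (-q) q (lam.1 i - lam.1 (i + 1))) *
          z ^ wtK k lam * q ^ n2K k lam *
          (if lam.1 0 ≤ n then
            qPoch (q ^ 2) (q ^ 2) n /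
              (qPoch (q ^ 2) (q ^ 2) (n - lam.1 0) * pochK (q ^ 2) (q ^ 2) k lam)
          else 0)
      = ∑ r ∈ range (n + 1),
          (-1) ^ r * z ^ (k * r) * q ^ ((k + 1) * r ^ 2) * gb (q ^ 2) n r *
            (qPoch (-z) q (2 * n + 1) / qPoch (z ^ 2 * q ^ (2 * r)) (q ^ 2) (n + 1)) *
            (1 - z * q ^ (2 * r)) := by
  obtain ⟨k, rfl⟩ := Nat.exists_eq_succ_of_ne_zero (Nat.one_le_iff_ne_zero.1 hk)
  have hqn : qPoch (q ^ 2) (q ^ 2) n ≠ 0 := qPoch_ne_zero fun i hi => by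
    rw [← pow_succ', ← pow_mul]
    exact hq (i + 1) (by lia) hi
  have hz2 : qPoch (z ^ 2) (q ^ 2) (2 * n + 1) ≠ 0 := qPoch_ne_zero fun i hi => by
    rw [← pow_mul]
    exact hz i (by lia)
  have hz1 : qPoch z q (2 * n + 1) ≠ 0 := left_ne_zero_of_mul (qPoch_sq z q _ ▸ hz2)
  rw [PartK.tsum_mul_ite_le, ← sum_mul_baileyTransform_kawanakaAlpha_sq z q k hqn hz2,
    ← sum_mul_kawanakaWeight q z k n _ hqn hz1]
  refine sum_congr rfl fun l _ => ?_
  rw [kawanakaWeight]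
  ring

/-- Corollary 1 (finite Kawanaka-type identity): for `k ≥ 1`, `n ≥ 0`,
`Σ_{l(λ)≤k} (∏_{i=1}^{k-1}(-q;q)_{λ_i-λ_{i+1}}) z^{|λ|} q^{n_2(λ)} [n choose λ]_{q^2}
 = Σ_{r=0}^n (-1)^r z^{kr} q^{(k+1)r^2} [n choose r]_{q^2}
     ((-z;q)_{2n+1}/(z^2 q^{2r};q^2)_{n+1}) (1 - z q^{2r})`. -/
theorem kawanaka_finite (k : ℕ) (hk : 1 ≤ k) (n : ℕ) (q z : ℂ) (hq : ‖q‖ < 1)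
    (hz : ∀ j : ℕ, j ≤ 2 * n → z ^ 2 * q ^ (2 * j) ≠ 1) :
    ∑' lam : PartK k,
        (∏ i ∈ Finset.range (k - 1), qPoch (-q) q (lam.1 i - lam.1 (i + 1))) *
          z ^ wtK k lam * q ^ n2K k lam *
          (if lam.1 0 ≤ n then
            qPoch (q ^ 2) (q ^ 2) n /
              (qPoch (q ^ 2) (q ^ 2) (n - lam.1 0) * pochK (q ^ 2) (q ^ 2) k lam)
          else 0)
      = ∑ r ∈ Finset.range (n + 1),
          (-1) ^ r * z ^ (k * r) * q ^ ((k + 1) * r ^ 2) * gb (q ^ 2) n r *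
            (qPoch (-z) q (2 * n + 1) / qPoch (z ^ 2 * q ^ (2 * r)) (q ^ 2) (n + 1)) *
            (1 - z * q ^ (2 * r)) :=
  kawanaka_finite_general k hk n q z
    (fun _ hj _ h => hq.ne (Complex.norm_eq_one_of_pow_eq_one h (by lia))) hz
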